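/- Under these hypotheses, for all 2 ≤ α ≤ r+2 and all n ∈ ℤ one has the two recursion relations (−1)^α·(q−1)·M_{α,n} = [M_{α-1,n-1}, M_{n+α-1}]_{q^α} and (−1)^α·(q−1)·M_{α,n} = [M_{n-α+1}, M_{α-1,n+1}]_{q^α}, where M_n := M_{1,n}. -/

import Mathlib

/-!
Take the bracket `[·, M 1 (n + α)]` with parameter `q ^ (2 * α)` of both sides of the M-system
relation `q ^ α • (M α (n + 1) * M α (n - 1)) = M α n ^ 2 - M (α + 1) n * M (α - 1) n`. All factors
except `M α (n - 1)` and `M (α - 1) n` quasi-commute with `M 1 (n + α)`, so what is left expresses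
`[M α (n - 1), M 1 (n + α)]` through `[M (α - 1) n, M 1 (n + α)]`, and the first recursion follows
by induction on `α`. The second recursion is the first one for the system `op (M α (-n))` in the
opposite ring.
-/

section QBracket

variable {S R : Type*} [CommRing S] [Ring R] [Algebra S R] {s t u c : S} {a x y : R}

/-- The `t`-deformed commutator `[x, y]_t = x y - t y x`. -/
def qBracket (t : S) (x y : R) : R :=
  x * y - t • (y * x)

/-- Quasi-commutation `x y = t y x`, i.e. the vanishing of `[x, y]_t`. -/
def QCommute (t : S) (x y : R) : Prop :=
  x * y = t • (y * x)

theorem qBracket_sub_left (t : S) (a b y : R) :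
    qBracket t (a - b) y = qBracket t a y - qBracket t b y := by
  simp only [qBracket, sub_mul, mul_sub, smul_sub]
  abel

theorem qBracket_smul_left (t c : S) (a y : R) :
    qBracket t (c • a) y = c • qBracket t a y := by
  simp only [qBracket, smul_mul_assoc, mul_smul_comm, smul_sub, smul_comm t c]

theorem QCommute.qBracket_eq_zero (h : QCommute t x y) : qBracket t x y = 0 :=
  sub_eq_zero.mpr h

theorem QCommute.qBracket_mul_left (h : QCommute s a y) (t : S) (b : R) :
    qBracket (s * t) (a * b) y = a * qBracket t b y := by
  have hab : y * (a * b) = y * a * b := (mul_assoc y a b).symm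
  have hyb : a * (y * b) = s • (y * a * b) := by rw [← mul_assoc, h, smul_mul_assoc]
  simp only [qBracket, mul_sub, mul_smul_comm, hyb, hab, mul_assoc a b y, smul_smul, mul_comm s t]

theorem QCommute.op_symm (h : QCommute t x y) :
    QCommute t (MulOpposite.op y) (MulOpposite.op x) :=
  congrArg MulOpposite.op h

theorem qBracket_eq_neg_smul_of_exchange {w z m p : R} (hstu : s * u = t * t)
    (ht : IsUnit t) (hw : IsUnit w) (exchange : t • (w * x) = p ^ 2 - m * z)
    (hmy : QCommute t m y) (hpy : QCommute t p y) (hwy : QCommute s w y)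
    (hmw : QCommute t m w) (hzy : qBracket t z y = c • w) :
    qBracket u x y = -(c • m) := by
  have hpp : qBracket (t * t) (p ^ 2) y = 0 := by
    rw [pow_two, hpy.qBracket_mul_left, hpy.qBracket_eq_zero, mul_zero]
  refine hw.mul_left_cancel (ht.smul_left_cancel.mp ?_)
  calc t • (w * qBracket u x y)
      = qBracket (t * t) (t • (w * x)) y := by
        rw [← hwy.qBracket_mul_left, hstu, qBracket_smul_left]
    _ = -(m * qBracket t z y) := by
        rw [exchange, qBracket_sub_left, hpp, hmy.qBracket_mul_left, zero_sub]
    _ = -(c • t • (w * m)) := by rw [hzy, mul_smul_comm, hmw]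
    _ = t • (w * -(c • m)) := by rw [mul_neg, mul_smul_comm, smul_neg, smul_comm c t]

end QBracket

/-- The quantum M-system `M α n`, `0 ≤ α ≤ N + 1`, with its extended quasi-commutation relations.
The M-system relation is written with `α + 1` in place of `α`, and the truncation `M (N + 1) n = 0`
is relaxed to the quasi-commutation of `M (N + 1) n` with the other variables. -/
structure IsQuantumMSystem {S R : Type*} [CommRing S] [Ring R] [Algebra S R]
    (q : Sˣ) (N : ℕ) (M : ℕ → ℤ → R) : Prop where
  zero (n : ℤ) : M 0 n = 1
  isUnit (α : ℕ) (n : ℤ) : α < N → IsUnit (M (α + 1) n)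
  exchange (α : ℕ) (n : ℤ) : α < N →
    (q : S) ^ (α + 1) • (M (α + 1) (n + 1) * M (α + 1) (n - 1)) =
      M (α + 1) n ^ 2 - M (α + 2) n * M α n
  qCommute (α β : ℕ) (n p : ℤ) : α ≤ N + 1 → β ≤ N + 1 → |p| ≤ |(β : ℤ) - α| + 1 →
    QCommute ((q ^ (p * (min α β : ℕ)) : Sˣ) : S) (M α n) (M β (n + p))

namespace IsQuantumMSystem

variable {S R : Type*} [CommRing S] [Ring R] [Algebra S R] {q : Sˣ} {N : ℕ} {M : ℕ → ℤ → R}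

theorem of_truncation (zero : ∀ n, M 0 n = 1) (top : ∀ n, M (N + 1) n = 0)
    (isUnit : ∀ α n, α < N → IsUnit (M (α + 1) n))
    (exchange : ∀ α n, α < N →
      (q : S) ^ (α + 1) • (M (α + 1) (n + 1) * M (α + 1) (n - 1)) =
        M (α + 1) n ^ 2 - M (α + 2) n * M α n)
    (qCommute : ∀ (α β : ℕ) (n p : ℤ), α ≤ N → β ≤ N → |p| ≤ |(β : ℤ) - α| + 1 →
      QCommute ((q ^ (p * (min α β : ℕ)) : Sˣ) : S) (M α n) (M β (n + p))) :
    IsQuantumMSystem q N M where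
  zero := zero
  isUnit := isUnit
  exchange := exchange
  qCommute α β n p hα hβ hp := by
    rcases hα.eq_or_lt with rfl | hα
    · simp only [QCommute, top, zero_mul, mul_zero, smul_zero]
    rcases hβ.eq_or_lt with rfl | hβ
    · simp only [QCommute, top, zero_mul, mul_zero, smul_zero]
    exact qCommute α β n p (Nat.lt_succ_iff.mp hα) (Nat.lt_succ_iff.mp hβ) hp

theorem commute (h : IsQuantumMSystem q N M) {α β : ℕ} (n : ℤ) (hα : α ≤ N + 1)
    (hβ : β ≤ N + 1) : Commute (M α n) (M β n) := by
  have hαβ := h.qCommute α β n 0 hα hβ (by rw [abs_zero]; positivity)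
  rwa [QCommute, zero_mul, zpow_zero, Units.val_one, one_smul, add_zero] at hαβ

theorem qCommute_of_le (h : IsQuantumMSystem q N M) {α β p : ℕ} (n : ℤ) (hα : α ≤ N + 1)
    (hβα : β ≤ α) (hp : p + β ≤ α + 1) :
    QCommute ((q : S) ^ (p * β)) (M α n) (M β (n + p)) := by
  have hβα_abs : |(β : ℤ) - α| = α - β := by rw [abs_sub_comm, abs_of_nonneg (by omega)]
  have hp_abs : |(p : ℤ)| ≤ |(β : ℤ) - α| + 1 := by rw [hβα_abs, Nat.abs_cast]; omega
  have hαβ := h.qCommute α β n p hα (hβα.trans hα) hp_abs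
  rwa [min_eq_right hβα, ← Nat.cast_mul, zpow_natCast, Units.val_pow_eq_pow_val] at hαβ

theorem qBracket_index_one_right (h : IsQuantumMSystem q N M) {α : ℕ} (hα : α ≤ N) (n : ℤ) :
    qBracket ((q : S) ^ (α + 1)) (M α (n - 1)) (M 1 (n + α)) =
      ((-1) ^ (α + 1) * ((q : S) - 1)) • M (α + 1) n := by
  induction α generalizing n with
  | zero => simp [qBracket, h.zero, sub_smul]
  | succ α ih =>
    have shift : n + (α + 1 : ℕ) = n + 1 + α := by push_cast; ring
    have hmy : QCommute ((q : S) ^ (α + 1)) (M (α + 2) n) (M 1 (n + (α + 1 : ℕ))) := by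
      simpa only [mul_one] using
        h.qCommute_of_le (α := α + 2) (β := 1) (p := α + 1) n (by omega) (by omega) (by omega)
    have hpy : QCommute ((q : S) ^ (α + 1)) (M (α + 1) n) (M 1 (n + (α + 1 : ℕ))) := by
      simpa only [mul_one] using
        h.qCommute_of_le (α := α + 1) (β := 1) (p := α + 1) n (by omega) (by omega) le_rfl
    have hwy : QCommute ((q : S) ^ α) (M (α + 1) (n + 1)) (M 1 (n + (α + 1 : ℕ))) := by
      simpa only [mul_one, shift] using
        h.qCommute_of_le (α := α + 1) (β := 1) (p := α) (n + 1) (by omega) (by omega) (by omega)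
    have hmw : QCommute ((q : S) ^ (α + 1)) (M (α + 2) n) (M (α + 1) (n + 1)) := by
      simpa only [one_mul, Nat.cast_one] using
        h.qCommute_of_le (α := α + 2) (β := α + 1) (p := 1) n (by omega) (by omega) (by omega)
    have hzy : qBracket ((q : S) ^ (α + 1)) (M α n) (M 1 (n + (α + 1 : ℕ))) =
        ((-1) ^ (α + 1) * ((q : S) - 1)) • M (α + 1) (n + 1) := by
      simpa only [shift, add_sub_cancel_right] using ih (by omega) (n + 1)
    rw [qBracket_eq_neg_smul_of_exchange (by ring) (q.isUnit.pow _) (h.isUnit α _ hα)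
      (h.exchange α n hα) hmy hpy hwy hmw hzy, pow_succ _ (α + 1), mul_neg_one, neg_mul, neg_smul]

theorem op_neg (h : IsQuantumMSystem q N M) :
    IsQuantumMSystem q N fun α n ↦ MulOpposite.op (M α (-n)) where
  zero n := congrArg MulOpposite.op (h.zero (-n))
  isUnit α n hα := (h.isUnit α (-n) hα).op
  exchange α n hα := by
    have hcomm : Commute (M (α + 2) (-n)) (M α (-n)) := h.commute (-n) (by omega) (by omega)
    have hexch := congrArg MulOpposite.op (h.exchange α (-n) hα)
    rw [hcomm.eq] at hexch
    rw [neg_add', neg_sub', sub_neg_eq_add]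
    exact hexch
  qCommute α β n p hα hβ hp := by
    have hβα := h.qCommute β α (-(n + p)) p hβ hα (by rwa [abs_sub_comm])
    rw [min_comm, show -(n + p) + p = -n by ring] at hβα
    exact hβα.op_symm

theorem qBracket_index_one_left (h : IsQuantumMSystem q N M) {α : ℕ} (hα : α ≤ N) (n : ℤ) :
    qBracket ((q : S) ^ (α + 1)) (M 1 (n - α)) (M α (n + 1)) =
      ((-1) ^ (α + 1) * ((q : S) - 1)) • M (α + 1) n := by
  have hop := congrArg MulOpposite.unop (h.op_neg.qBracket_index_one_right hα (-n))
  rw [neg_sub', neg_neg, sub_neg_eq_add, neg_add', neg_neg] at hop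
  exact hop

end IsQuantumMSystem

theorem exists_units_center_coe_zpow {R : Type*} [Ring R] (q : Rˣ)
    (hq : ∀ x : R, (q : R) * x = x * q) :
    ∃ z : (Subring.center R)ˣ, ∀ k : ℤ, (((z ^ k : (Subring.center R)ˣ) : Subring.center R) : R) =
      ((q ^ k : Rˣ) : R) := by
  have hcenter : (q : R) ∈ Subring.center R := Subring.mem_center_iff.mpr fun x ↦ (hq x).symm
  have hcenter_inv : ((q⁻¹ : Rˣ) : R) ∈ Subring.center R :=
    Subring.mem_center_iff.mpr fun x ↦ (Commute.units_inv_left (hq x)).eq.symm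
  let z : (Subring.center R)ˣ :=
    ⟨⟨q, hcenter⟩, ⟨_, hcenter_inv⟩, Subtype.ext q.mul_inv, Subtype.ext q.inv_mul⟩
  have hz : Units.map (Subring.center R).subtype.toMonoidHom z = q := Units.ext rfl
  exact ⟨z, fun k ↦ by rw [← hz, ← map_zpow]; rfl⟩

theorem quantum_Q_recursion_relations
    {R : Type*} [Ring R] (q A Δ : Rˣ)
    (hq : ∀ x : R, (q : R) * x = x * (q : R))
    (r : ℕ) (hr : 1 ≤ r)
    (M Mi : ℕ → ℤ → R)
    (hM0 : ∀ n : ℤ, M 0 n = 1)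
    (hMtop : ∀ n : ℤ, M (r + 2) n = 0)
    (hMiL : ∀ (α : ℕ) (n : ℤ), α ≤ r + 1 → M α n * Mi α n = 1)
    (hMiR : ∀ (α : ℕ) (n : ℤ), α ≤ r + 1 → Mi α n * M α n = 1)
    (hMsys : ∀ (α : ℕ) (n : ℤ), 1 ≤ α → α ≤ r + 1 →
      (q : R) ^ α * M α (n + 1) * M α (n - 1) = M α n ^ 2 - M (α + 1) n * M (α - 1) n)
    (hcom : ∀ (α β ε : ℕ) (n : ℤ), ε ≤ 1 → α ≤ r + 1 → β ≤ r + 1 →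
      M α n * M β (n + (ε : ℤ)) = (q : R) ^ (ε * min α β) * M β (n + (ε : ℤ)) * M α n)
    (hAΔ : ∀ n : ℤ, M (r + 1) n = ((A ^ n : Rˣ) : R) * (Δ : R))
    (hΔM : ∀ (α : ℕ) (n : ℤ), 1 ≤ α → α ≤ r + 1 →
      (Δ : R) * M α n = ((q ^ ((α : ℤ) * n) : Rˣ) : R) * M α n * (Δ : R))
    (hAM : ∀ (α : ℕ) (n : ℤ), 1 ≤ α → α ≤ r + 1 →
      (A : R) * M α n = ((q ^ (-(α : ℤ)) : Rˣ) : R) * M α n * (A : R))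
    (hΔA : (Δ : R) * (A : R) = (q : R) ^ (r + 1) * (A : R) * (Δ : R))
    (hext : ∀ (α β : ℕ) (n p : ℤ), α ≤ r + 1 → β ≤ r + 1 →
      |p| ≤ |(β : ℤ) - (α : ℤ)| + 1 →
      M α n * M β (n + p) = ((q ^ (p * ((min α β : ℕ) : ℤ)) : Rˣ) : R) * M β (n + p) * M α n) :
    ∀ (α : ℕ) (n : ℤ), 2 ≤ α → α ≤ r + 2 →
      ((-1 : R) ^ α * ((q : R) - 1) * M α n
          = M (α - 1) (n - 1) * M 1 (n + (α : ℤ) - 1)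
            - (q : R) ^ α * M 1 (n + (α : ℤ) - 1) * M (α - 1) (n - 1))
        ∧ ((-1 : R) ^ α * ((q : R) - 1) * M α n
          = M 1 (n - (α : ℤ) + 1) * M (α - 1) (n + 1)
            - (q : R) ^ α * M (α - 1) (n + 1) * M 1 (n - (α : ℤ) + 1)) := by
  obtain ⟨z, hz⟩ := exists_units_center_coe_zpow q hq
  have z_coe : ((z : Subring.center R) : R) = q := by simpa only [zpow_one] using hz 1
  have hM : IsQuantumMSystem z (r + 1) M := by
    refine .of_truncation hM0 hMtop (fun α n hα ↦ ⟨⟨_, _, hMiL _ n hα, hMiR _ n hα⟩, rfl⟩) ?_ ?_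
    · intro α n hα
      simpa only [Subring.smul_def, SubmonoidClass.coe_pow, z_coe, smul_eq_mul, mul_assoc,
        Nat.add_sub_cancel] using hMsys (α + 1) n (by omega) hα
    · intro α β n p hα hβ hp
      simpa only [QCommute, Subring.smul_def, hz, smul_eq_mul, mul_assoc]
        using hext α β n p hα hβ hp
  intro α n hα hαr
  obtain ⟨k, rfl⟩ : ∃ k, α = k + 1 := ⟨α - 1, by omega⟩
  have hk : k ≤ r + 1 := by omega
  have left_index : n + (k + 1 : ℕ) - 1 = n + k := by push_cast; ring
  have right_index : n - (k + 1 : ℕ) + 1 = n - k := by push_cast; ring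
  rw [left_index, right_index, Nat.add_sub_cancel, ← z_coe, mul_assoc (_ ^ (k + 1)) (M 1 _),
    mul_assoc (_ ^ (k + 1)) (M k _)]
  exact ⟨(hM.qBracket_index_one_right hk n).symm, (hM.qBracket_index_one_left hk n).symm⟩
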